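/- Let k ≥ 1 and let R = ℝ[u_0, …, u_k]/(∑_{i=0}^{k} u_i² − 1) be the quotient of the polynomial ring by the principal ideal generated by ∑_{i=0}^{k} u_i² − 1 (the coordinate ring of the real unit sphere S^k). Then every unit of R is the image of a nonzero real constant: if r ∈ R is invertible, then there exists c ∈ ℝ, c ≠ 0, such that r equals the image of the constant polynomial c. -/

import Mathlib

/-!
Write `P = ℝ[u₁,…,u_k]` and `Q = ∑ uᵢ²` (sum over `i ≥ 1`). The coordinate ring is
`P[X]/(X² + Q - 1)`, with `X = u₀`, and it is free over `P` on `1, X`. So a unit is the class of some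
`a + bX` with `a, b ∈ P`, and its norm `a² + (Q - 1) b²` is a unit of `P`, hence a real constant `d`
(`norm_mul_norm_eq_one`).

Far from the origin both terms of `a² + (Q - 1) b²` are nonnegative, so they cannot cancel.
Restricted to any line `t ↦ t v` with `v ≠ 0`, the one-variable polynomials `a(t v)` and `t b(t v)` are
bounded as `t → ∞`, hence constant (`line_constant`). This gives `b = 0` and `a` constant
(`constant_of_norm_constant`). Nonzero vectors `v ∈ ℝᵏ` exist because `k ≥ 1`; for `k = 0` the
statement fails.
-/

open Polynomial in
/-- The one-variable form of the argument: if the norm form is constant on a line through the origin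
with direction of squared length `w > 0`, then `p` is constant and `s` vanishes on it. -/
lemma line_constant (p s : ℝ[X]) (w d : ℝ) (hw : 0 < w)
    (h : ∀ t : ℝ, p.eval t ^ 2 + (w * t ^ 2 - 1) * s.eval t ^ 2 = d) :
    p.degree ≤ 0 ∧ s = 0 := by
  have hev : ∀ᶠ t : ℝ in Filter.atTop, 2 ≤ w * t ^ 2 :=
    ((Filter.tendsto_pow_atTop two_ne_zero).const_mul_atTop hw).eventually_ge_atTop 2
  have hp : p.degree ≤ 0 := by
    rw [← Polynomial.isBoundedUnder_abs_atTop_iff]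
    refine ⟨|d| + 1, ?_⟩
    rw [Filter.eventually_map]
    filter_upwards [hev] with t ht
    have h1 := h t
    have h2 : 0 ≤ (w * t ^ 2 - 1) * s.eval t ^ 2 := mul_nonneg (by linarith) (sq_nonneg _)
    have h3 := le_abs_self d
    refine abs_le_of_sq_le_sq (by nlinarith [abs_nonneg d]) (by positivity)
  have hs : (X * s).degree ≤ 0 := by
    rw [← Polynomial.isBoundedUnder_abs_atTop_iff]
    refine ⟨2 * |d| / w + 1, ?_⟩
    rw [Filter.eventually_map]
    filter_upwards [hev] with t ht
    have h1 := h t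
    have h3 := le_abs_self d
    -- `w t² - 1 ≥ w t² / 2` once `w t² ≥ 2`
    have h4 : (w * t ^ 2 - 2) * s.eval t ^ 2 ≥ 0 := mul_nonneg (by linarith) (sq_nonneg _)
    have h5 : (t * s.eval t) ^ 2 ≤ 2 * |d| / w := by
      rw [le_div_iff₀ hw]
      nlinarith [sq_nonneg (p.eval t)]
    have h6 : 0 ≤ 2 * |d| / w := by positivity
    rw [eval_mul, eval_X]
    exact abs_le_of_sq_le_sq (by nlinarith) (by positivity)
  refine ⟨hp, ?_⟩
  by_contra hne
  rw [degree_mul, degree_X, degree_eq_natDegree hne] at hs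
  have : 1 + s.natDegree ≤ 0 := by exact_mod_cast hs
  omega

/-- The restriction of `f` to the line `t ↦ t v`, as a polynomial in `t`. -/
noncomputable def lineRestrict {k : ℕ} (v : Fin k → ℝ) (f : MvPolynomial (Fin k) ℝ) :
    Polynomial ℝ :=
  MvPolynomial.aeval (fun i => Polynomial.C (v i) * Polynomial.X) f

lemma eval_lineRestrict {k : ℕ} (v : Fin k → ℝ) (f : MvPolynomial (Fin k) ℝ) (t : ℝ) :
    (lineRestrict v f).eval t = MvPolynomial.eval (fun i => v i * t) f := by
  induction f using MvPolynomial.induction_on with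
  | C a => simp [lineRestrict]
  | add p q hp hq => simp_all [lineRestrict]
  | mul_X p i hp => simp_all [lineRestrict]

lemma constant_of_norm_constant {k : ℕ} (hk : 1 ≤ k) (a b : MvPolynomial (Fin k) ℝ) (d : ℝ)
    (h : a ^ 2 + ((∑ i, MvPolynomial.X i ^ 2) - 1) * b ^ 2 = MvPolynomial.C d) :
    b = 0 ∧ ∃ c, a = MvPolynomial.C c := by
  have key : ∀ v : Fin k → ℝ, v ≠ 0 →
      (lineRestrict v a).degree ≤ 0 ∧ lineRestrict v b = 0 := by
    intro v hv
    obtain ⟨i, hi⟩ := Function.ne_iff.mp hv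
    refine line_constant _ _ (∑ i, v i ^ 2) d
      (Finset.sum_pos' (fun i _ => sq_nonneg _) ⟨i, Finset.mem_univ _, by
        have : v i ≠ 0 := hi
        positivity⟩) fun t => ?_
    have := congrArg (MvPolynomial.eval (fun i => v i * t)) h
    simp only [map_add, map_mul, map_pow, map_sub, map_sum, map_one, MvPolynomial.eval_X,
      MvPolynomial.eval_C, mul_pow, ← Finset.sum_mul] at this
    rw [eval_lineRestrict, eval_lineRestrict]
    exact this
  constructor
  · refine MvPolynomial.funext fun v => ?_
    by_cases hv : v = 0
    · -- the origin lies on the line spanned by any nonzero vector, e.g. `(1,…,1)`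
      have h1 : (fun _ => 1 : Fin k → ℝ) ≠ 0 := fun h0 => by
        simpa using congrFun h0 ⟨0, hk⟩
      have := congrArg (Polynomial.eval 0) (key _ h1).2
      rw [eval_lineRestrict] at this
      subst hv
      simpa [Pi.zero_def] using this
    · have := congrArg (Polynomial.eval 1) (key v hv).2
      rw [eval_lineRestrict] at this
      simpa using this
  · refine ⟨MvPolynomial.eval 0 a, MvPolynomial.funext fun v => ?_⟩
    rw [MvPolynomial.eval_C]
    by_cases hv : v = 0
    · rw [hv]
    · have hc := Polynomial.eq_C_of_degree_le_zero (key v hv).1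
      have h1 := eval_lineRestrict v a 1
      have h0 := eval_lineRestrict v a 0
      rw [hc, Polynomial.eval_C] at h1 h0
      simp only [mul_one, mul_zero] at h1 h0
      rw [← h1, h0]
      rfl

open Polynomial in
/-- Multiplicativity of the norm from `A[X]/(X² + m)` to `A`, for inverse elements. -/
lemma norm_mul_norm_eq_one {A : Type*} [CommRing A] [Nontrivial A] (m a b a' b' : A)
    (h : (X ^ 2 + C m) ∣ (C b * X + C a) * (C b' * X + C a') - 1) :
    (a ^ 2 + m * b ^ 2) * (a' ^ 2 + m * b' ^ 2) = 1 := by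
  -- the remainder of the product minus one is linear, so it is zero
  have hd : (X ^ 2 + C m) ∣ C (a * b' + b * a') * X + C (a * a' - m * (b * b') - 1) := by
    have := dvd_sub h (dvd_mul_right (X ^ 2 + C m) (C (b * b')))
    convert this using 1
    simp only [map_add, map_sub, map_mul, map_one]
    ring
  have hz : C (a * b' + b * a') * X + C (a * a' - m * (b * b') - 1) = 0 := by
    by_contra hne
    refine (monic_X_pow_add_C m two_ne_zero).not_dvd_of_degree_lt hne ?_ hd
    rw [degree_X_pow_add_C two_pos]
    exact degree_linear_lt
  have h0 := congrArg (fun p => coeff p 0) hz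
  have h1 := congrArg (fun p => coeff p 1) hz
  simp [coeff_one] at h0 h1
  linear_combination (a * a' - m * (b * b') + 1) * h0 + m * (a * b' + b * a') * h1

open Polynomial in
/-- Division with remainder by `X² + m`. -/
lemma exists_linear_rem {A : Type*} [CommRing A] [Nontrivial A] (m : A) (f : A[X]) :
    ∃ a b : A, (X ^ 2 + C m) ∣ f - (C b * X + C a) := by
  have hm := monic_X_pow_add_C m two_ne_zero
  have hdeg := degree_modByMonic_lt f hm
  rw [degree_X_pow_add_C two_pos] at hdeg
  have hle : (f %ₘ (X ^ 2 + C m)).degree ≤ 1 := Order.le_of_lt_succ hdeg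
  refine ⟨(f %ₘ (X ^ 2 + C m)).coeff 0, (f %ₘ (X ^ 2 + C m)).coeff 1, ?_⟩
  rw [← eq_X_add_C_of_degree_le_one hle]
  exact ⟨f /ₘ (X ^ 2 + C m), by
    linear_combination -modByMonic_add_div f (X ^ 2 + C m)⟩

/-- In the coordinate ring `R = ℝ[u₀,…,u_k]/(∑ uᵢ² − 1)` of the real unit sphere,
every unit is the image of a nonzero real constant. -/
theorem sphere_coordinate_ring_units (k : ℕ) (hk : 1 ≤ k)
    (r : MvPolynomial (Fin (k + 1)) ℝ ⧸
      Ideal.span ({(∑ i, MvPolynomial.X i ^ 2) - 1} :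
        Set (MvPolynomial (Fin (k + 1)) ℝ)))
    (hr : IsUnit r) :
    ∃ c : ℝ, c ≠ 0 ∧
      r = Ideal.Quotient.mk
        (Ideal.span ({(∑ i, MvPolynomial.X i ^ 2) - 1} :
          Set (MvPolynomial (Fin (k + 1)) ℝ)))
        (MvPolynomial.C c) := by
  obtain ⟨s, hs⟩ := hr.exists_right_inv
  obtain ⟨f, rfl⟩ := Ideal.Quotient.mk_surjective r
  obtain ⟨g, rfl⟩ := Ideal.Quotient.mk_surjective s
  rw [← map_mul, ← map_one (Ideal.Quotient.mk _), Ideal.Quotient.eq,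
    Ideal.mem_span_singleton] at hs
  obtain ⟨m, hm⟩ : ∃ m : MvPolynomial (Fin k) ℝ, m = (∑ i, MvPolynomial.X i ^ 2) - 1 := ⟨_, rfl⟩
  let e := MvPolynomial.finSuccEquiv ℝ k
  have hS : e ((∑ i, MvPolynomial.X i ^ 2) - 1) = Polynomial.X ^ 2 + Polynomial.C m := by
    simp [e, hm, Fin.sum_univ_succ, MvPolynomial.finSuccEquiv_X_zero,
      MvPolynomial.finSuccEquiv_X_succ, add_sub_assoc]
  have hfg := map_dvd e hs
  rw [hS, map_sub, map_mul, map_one] at hfg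
  obtain ⟨a, b, hf⟩ := exists_linear_rem m (e f)
  obtain ⟨a', b', hg⟩ := exists_linear_rem m (e g)
  have hN := norm_mul_norm_eq_one m a b a' b' (by
    have := dvd_sub (dvd_sub hfg (hf.mul_right (e g)))
      (hg.mul_left (Polynomial.C b * Polynomial.X + Polynomial.C a))
    convert this using 1
    ring)
  obtain ⟨d, -, hd⟩ := MvPolynomial.isUnit_iff_eq_C_of_isReduced.mp (IsUnit.of_mul_eq_one _ hN)
  rw [hm] at hd
  obtain ⟨rfl, c, rfl⟩ := constant_of_norm_constant hk a b d hd
  refine ⟨c, ?_, ?_⟩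
  · rintro rfl
    simp at hN
  · have hC : e (MvPolynomial.C c) = Polynomial.C (MvPolynomial.C c) := e.commutes c
    rw [Ideal.Quotient.eq, Ideal.mem_span_singleton, ← map_dvd_iff e, hS, map_sub, hC]
    simpa using hf
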